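/- For every g ∈ GL_n(ℂ) and every u ∈ ℂ, the Pfaffian Pf(Φ̃(u)) ∈ End(P) is GL_n-invariant: π(g) ∘ Pf(Φ̃(u)) ∘ π(g)⁻¹ = Pf(Φ̃(u)). -/

import Mathlib

open Matrix MvPolynomial

noncomputable section

/-- Index set for entries `x_{i,j}` with `i < j`. -/
abbrev Idx (n : ℕ) := {p : Fin n × Fin n // p.1 < p.2}

/-- Polynomial algebra on the space of alternating `n × n` matrices. -/
abbrev P (n : ℕ) := MvPolynomial (Idx n) ℂ

/-- Multiplication operator `M_{i,j}` (with `M_{j,i} = -M_{i,j}`, `M_{i,i} = 0`). -/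
def Mop (n : ℕ) (i j : Fin n) : Module.End ℂ (P n) :=
  if h : i < j then LinearMap.mulLeft ℂ (X ⟨(i, j), h⟩)
  else if h' : j < i then -LinearMap.mulLeft ℂ (X ⟨(j, i), h'⟩ : P n)
  else 0

/-- Derivation `D_{i,j} = ∂/∂x_{i,j}` (with `D_{j,i} = -D_{i,j}`, `D_{i,i} = 0`). -/
def Dop (n : ℕ) (i j : Fin n) : Module.End ℂ (P n) :=
  if h : i < j then ((pderiv ⟨(i, j), h⟩ : Derivation ℂ (P n) (P n)) : P n →ₗ[ℂ] P n)
  else if h' : j < i then -((pderiv ⟨(j, i), h'⟩ : Derivation ℂ (P n) (P n)) : P n →ₗ[ℂ] P n)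
  else 0

/-- The generic alternating matrix with entries in `P n`. -/
def genMat (n : ℕ) : Matrix (Fin n) (Fin n) (P n) := Matrix.of fun i j =>
  if h : i < j then X ⟨(i, j), h⟩
  else if h' : j < i then -X ⟨(j, i), h'⟩
  else 0

/-- The representation `π(g)` of `GL n ℂ` on `P n`, sending `x_{i,j}` to the
`(i,j)`-entry of `g⁻¹ x ᵗ(g⁻¹)`. -/
def piHom (n : ℕ) (g : GL (Fin n) ℂ) : P n →ₐ[ℂ] P n :=
  aeval fun v : Idx n =>
    ((((g⁻¹ : GL (Fin n) ℂ) : Matrix (Fin n) (Fin n) ℂ).map (algebraMap ℂ (P n)) * genMat n *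
      (((g⁻¹ : GL (Fin n) ℂ) : Matrix (Fin n) (Fin n) ℂ).map (algebraMap ℂ (P n)))ᵀ))
      v.1.1 v.1.2

/-- Pfaffian of a `2m × 2m` matrix with (possibly noncommuting) entries in a `ℂ`-algebra. -/
def Pf {A : Type*} [Ring A] [Algebra ℂ A] {m : ℕ} (B : Matrix (Fin (2 * m)) (Fin (2 * m)) A) :
    A :=
  (((2 : ℂ) ^ m * m.factorial)⁻¹) • ∑ σ : Equiv.Perm (Fin (2 * m)),
    (Equiv.Perm.sign σ : ℤ) •
      (List.ofFn (fun i : Fin m =>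
        B (σ ⟨2 * (i : ℕ), by have := i.isLt; omega⟩)
          (σ ⟨2 * (i : ℕ) + 1, by have := i.isLt; omega⟩))).prod

/-- The matrix `J_n` with 1's on the anti-diagonal. -/
def Jmat (A : Type*) [Zero A] [One A] (n : ℕ) : Matrix (Fin n) (Fin n) A :=
  Matrix.of fun i j => if (i : ℕ) + (j : ℕ) = n - 1 then 1 else 0

/-- Reindexing `Fin n ⊕ Fin n ≃ Fin (2*n)`. -/
def sumEquiv (n : ℕ) : (Fin n ⊕ Fin n) ≃ Fin (2 * n) :=
  finSumFinEquiv.trans (finCongr (two_mul n).symm)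

/-- The alternating matrix `Φ̃(u) = [[M, u·J_n], [−u·J_n, −J_n D J_n]]` over `End(P)`. -/
def PhiTilde (n : ℕ) (u : ℂ) : Matrix (Fin (2 * n)) (Fin (2 * n)) (Module.End ℂ (P n)) :=
  Matrix.reindex (sumEquiv n) (sumEquiv n)
    (Matrix.fromBlocks (Matrix.of fun i j => Mop n i j) (u • Jmat (Module.End ℂ (P n)) n)
      (-(u • Jmat (Module.End ℂ (P n)) n))
      (-(Jmat (Module.End ℂ (P n)) n * (Matrix.of fun i j => Dop n i j) *
          Jmat (Module.End ℂ (P n)) n)))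

/-!
An element of `P n` is a polynomial function `f` on alternating matrices, and `π(g)` is
`f ↦ f(g⁻¹ · g⁻ᵀ)`. Hence conjugation by `π(g)` turns multiplication by `f` into multiplication by
`π(g) f`, and the derivative in a direction `Δ` into the derivative in the direction `g Δ gᵀ`;
entrywise this says `M ↦ g⁻¹ M g⁻ᵀ` and `D ↦ gᵀ D g`. As `J² = 1`, both are accounted for by a
single congruence `Φ̃(u) ↦ h Φ̃(u) hᵀ` with `h = diag(g⁻¹, J gᵀ J)`, which fixes the scalar blocks
`± u J`. Scalars commute with the entries, so the usual expansion gives `Pf(h B hᵀ) = det h · Pf B`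
even over a noncommutative algebra, and `det h = 1`.
-/

section Congruence

variable {R A A' l m n o : Type*} [CommSemiring R] [Semiring A] [Algebra R A] [Semiring A']
  [Algebra R A']

/-- The congruence transform `a B aᵀ` of a square matrix over an `R`-algebra by a matrix of scalars.
The algebra need not be commutative. -/
def congruence [Fintype n] (a : Matrix m n R) (B : Matrix n n A) : Matrix m m A :=
  a.map (algebraMap R A) * B * aᵀ.map (algebraMap R A)

lemma congruence_apply [Fintype n] (a : Matrix m n R) (B : Matrix n n A) (i j : m) :
    congruence a B i j = ∑ k, ∑ l, (a i k * a j l) • B k l := by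
  simp only [congruence, mul_apply, map_apply, transpose_apply, Finset.sum_mul]
  rw [Finset.sum_comm]
  refine Finset.sum_congr rfl fun k _ ↦ Finset.sum_congr rfl fun l _ ↦ ?_
  rw [← Algebra.commutes, ← mul_assoc, ← map_mul, ← Algebra.smul_def, mul_comm]

lemma map_congruence [Fintype n] (L : A →ₗ[R] A') (a : Matrix m n R) (B : Matrix n n A) :
    (congruence a B).map L = congruence a (B.map L) := by
  ext i j
  simp only [map_apply, congruence_apply, map_sum, map_smul]

lemma congruence_congruence [Fintype m] [Fintype n] (a : Matrix l m R) (b : Matrix m n R)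
    (B : Matrix n n A) : congruence a (congruence b B) = congruence (a * b) B := by
  simp only [congruence, transpose_mul, Matrix.map_mul, Matrix.mul_assoc]

lemma one_congruence [Fintype n] [DecidableEq n] (B : Matrix n n A) :
    congruence (1 : Matrix n n R) B = B := by
  simp [congruence]

lemma transpose_congruence [Fintype n] (a : Matrix m n R) (B : Matrix n n A) :
    (congruence a B)ᵀ = congruence a Bᵀ := by
  ext i j
  simp only [transpose_apply, congruence_apply]
  rw [Finset.sum_comm]
  simp only [mul_comm]

lemma congruence_neg {A : Type*} [Ring A] [Algebra R A] [Fintype n] (a : Matrix m n R)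
    (B : Matrix n n A) : congruence a (-B) = -congruence a B := by
  simp only [congruence, Matrix.mul_neg, Matrix.neg_mul]

lemma congruence_reindex [Fintype n] [Fintype o] (e₁ : m ≃ l) (e₂ : n ≃ o) (a : Matrix m n R)
    (B : Matrix n n A) :
    congruence (reindex e₁ e₂ a) (reindex e₂ e₂ B) = reindex e₁ e₁ (congruence a B) := by
  simp only [congruence, reindex_apply, ← submatrix_map, transpose_submatrix, submatrix_mul_equiv]

lemma congruence_fromBlocks [Fintype m] [Fintype n] (a : Matrix l m R) (d : Matrix o n R)
    (A₁₁ : Matrix m m A) (A₁₂ : Matrix m n A) (A₂₁ : Matrix n m A) (A₂₂ : Matrix n n A) :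
    congruence (fromBlocks a 0 0 d) (fromBlocks A₁₁ A₁₂ A₂₁ A₂₂) =
      fromBlocks (congruence a A₁₁) (a.map (algebraMap R A) * A₁₂ * dᵀ.map (algebraMap R A))
        (d.map (algebraMap R A) * A₂₁ * aᵀ.map (algebraMap R A)) (congruence d A₂₂) := by
  simp [congruence, fromBlocks_transpose, fromBlocks_map, fromBlocks_multiply, Matrix.map_zero]

end Congruence

section Pfaffian

lemma sum_sign_smul_sum_prod_smul {n R M : Type*} [Fintype n] [DecidableEq n] [CommRing R]
    [AddCommGroup M] [Module R M] (a : Matrix n n R) (w : (n → n) → M) :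
    ∑ σ : Equiv.Perm n, (Equiv.Perm.sign σ : ℤ) • ∑ f : n → n, (∏ k, a (σ k) (f k)) • w f =
      a.det • ∑ σ : Equiv.Perm n, (Equiv.Perm.sign σ : ℤ) • w σ := by
  have sum_sign_prod (f : n → n) : ∑ σ : Equiv.Perm n, (Equiv.Perm.sign σ : ℤ) •
      (∏ k, a (σ k) (f k)) • w f = (a.submatrix id f).det • w f := by
    simp only [det_apply', Finset.sum_smul, mul_smul, Int.cast_smul_eq_zsmul, submatrix_apply, id]
  simp only [Finset.smul_sum]
  rw [Finset.sum_comm]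
  simp only [sum_sign_prod]
  refine (Fintype.sum_of_injective (fun σ : Equiv.Perm n ↦ ⇑σ) DFunLike.coe_injective _ _
    (fun f hf ↦ ?_) fun σ ↦ ?_).symm
  · have f_not_injective : ¬ Function.Injective f := fun hinj ↦
      hf ⟨Equiv.ofBijective f (Finite.injective_iff_bijective.1 hinj), rfl⟩
    obtain ⟨i, j, hij, hne⟩ := Function.not_injective_iff.1 f_not_injective
    rw [det_zero_of_column_eq hne fun k ↦ by simp only [submatrix_apply, hij], zero_smul]
  · rw [det_permute', mul_comm, mul_smul, Int.cast_smul_eq_zsmul]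

/-- The identification of `Fin m × Fin 2` with `Fin (2 * m)` grouping the positions into the
consecutive pairs `(2i, 2i + 1)`. -/
def pairEquiv (m : ℕ) : Fin m × Fin 2 ≃ Fin (2 * m) :=
  finProdFinEquiv.trans (finCongr (mul_comm m 2))

/-- The ordered monomial `∏ᵢ B (F (i, 0)) (F (i, 1))` in the entries of `B`. -/
def pairedProd {ι A : Type*} [Monoid A] {m : ℕ} (B : Matrix ι ι A) (F : Fin m × Fin 2 → ι) : A :=
  (List.ofFn fun i ↦ B (F (i, 0)) (F (i, 1))).prod

lemma Pf_eq_sum_pairedProd {A : Type*} [Ring A] [Algebra ℂ A] {m : ℕ}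
    (B : Matrix (Fin (2 * m)) (Fin (2 * m)) A) :
    Pf B = ((2 : ℂ) ^ m * m.factorial)⁻¹ • ∑ σ : Equiv.Perm (Fin (2 * m)),
      (Equiv.Perm.sign σ : ℤ) • pairedProd B (σ ∘ pairEquiv m) := by
  have pairEquiv_zero (i : Fin m) : pairEquiv m (i, 0) = ⟨2 * i, by lia⟩ := by
    ext; simp [pairEquiv]
  have pairEquiv_one (i : Fin m) : pairEquiv m (i, 1) = ⟨2 * i + 1, by lia⟩ := by
    ext; simp [pairEquiv, add_comm]
  simp only [Pf, pairedProd, Function.comp_apply, pairEquiv_zero, pairEquiv_one]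

lemma pairedProd_congruence {ι κ R A : Type*} [CommSemiring R] [Semiring A] [Algebra R A]
    [Fintype ι] {m : ℕ} (a : Matrix κ ι R) (B : Matrix ι ι A) (F : Fin m × Fin 2 → κ) :
    pairedProd (congruence a B) F =
      ∑ G : Fin m × Fin 2 → ι, (∏ k, a (F k) (G k)) • pairedProd B G := by
  classical
  let splitPairs : (Fin m × Fin 2 → ι) ≃ (Fin m → ι × ι) :=
    (Equiv.curry _ _ _).trans (Equiv.piCongrRight fun _ ↦ finTwoArrowEquiv ι)
  simp only [pairedProd, congruence_apply, ← Fintype.sum_prod_type']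
  rw [← MultilinearMap.mkPiAlgebraFin_apply (R := R), MultilinearMap.map_sum,
    ← splitPairs.sum_comp]
  refine Finset.sum_congr rfl fun G _ ↦ ?_
  rw [MultilinearMap.map_smul_univ, MultilinearMap.mkPiAlgebraFin_apply, Fintype.prod_prod_type]
  simp only [Fin.prod_univ_two]
  rfl

lemma Pf_congruence {A : Type*} [Ring A] [Algebra ℂ A] {m : ℕ}
    (a : Matrix (Fin (2 * m)) (Fin (2 * m)) ℂ) (B : Matrix (Fin (2 * m)) (Fin (2 * m)) A) :
    Pf (congruence a B) = a.det • Pf B := by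
  have expand (σ : Equiv.Perm (Fin (2 * m))) :
      pairedProd (congruence a B) (σ ∘ pairEquiv m) =
        ∑ f : Fin (2 * m) → Fin (2 * m),
          (∏ k, a (σ k) (f k)) • pairedProd B (f ∘ pairEquiv m) := by
    rw [pairedProd_congruence, ← ((pairEquiv m).symm.arrowCongr (Equiv.refl _)).sum_comp]
    refine Finset.sum_congr rfl fun f _ ↦ ?_
    rw [← (pairEquiv m).prod_comp]
    rfl
  simp only [Pf_eq_sum_pairedProd, expand]
  rw [sum_sign_smul_sum_prod_smul a fun f ↦ pairedProd B (f ∘ pairEquiv m), smul_comm]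

lemma map_Pf {A B F : Type*} [Ring A] [Algebra ℂ A] [Ring B] [Algebra ℂ B] [FunLike F A B]
    [AlgHomClass F ℂ A B] {m : ℕ} (φ : F) (M : Matrix (Fin (2 * m)) (Fin (2 * m)) A) :
    φ (Pf M) = Pf (M.map φ) := by
  simp only [Pf, map_smul, map_sum, map_zsmul, map_list_prod, List.map_ofFn]
  rfl

end Pfaffian

section GenericMatrix

lemma ext_of_transpose_eq_neg {ι A : Type*} [LinearOrder ι] [AddGroup A] [IsAddTorsionFree A]
    {B C : Matrix ι ι A} (hB : Bᵀ = -B) (hC : Cᵀ = -C) (h : ∀ i j, i < j → B i j = C i j) :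
    B = C := by
  have diag_eq_zero {B : Matrix ι ι A} (hB : Bᵀ = -B) (i : ι) : B i i = 0 :=
    self_eq_neg.1 (congr_fun₂ hB i i)
  ext i j
  rcases lt_trichotomy i j with hij | rfl | hji
  · exact h i j hij
  · rw [diag_eq_zero hB, diag_eq_zero hC]
  · rw [← transpose_apply B, ← transpose_apply C, hB, hC, Matrix.neg_apply, Matrix.neg_apply,
      h j i hji]

lemma transpose_map_eq_neg {ι A A' F : Type*} [AddGroup A] [AddGroup A'] [FunLike F A A']
    [AddMonoidHomClass F A A'] (f : F) {B : Matrix ι ι A} (hB : Bᵀ = -B) :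
    (B.map f)ᵀ = -B.map f := by
  rw [← transpose_map, hB, Matrix.map_neg f (map_neg f)]

variable {n : ℕ}

lemma transpose_genMat : (genMat n)ᵀ = -genMat n := by
  ext1 i j
  simp only [transpose_apply, Matrix.neg_apply, genMat, of_apply]
  rcases lt_trichotomy i j with h | rfl | h
  · simp [h, h.not_gt]
  · simp
  · simp [h, h.not_gt]

lemma genMat_of_lt {i j : Fin n} (h : i < j) : genMat n i j = X ⟨(i, j), h⟩ := by
  simp [genMat, h]

lemma map_piHom_genMat (g : GL (Fin n) ℂ) :
    (genMat n).map (piHom n g) = congruence (↑g⁻¹ : Matrix (Fin n) (Fin n) ℂ) (genMat n) := by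
  refine ext_of_transpose_eq_neg (transpose_map_eq_neg _ transpose_genMat) ?_ fun i j h ↦ ?_
  · rw [transpose_congruence, transpose_genMat, congruence_neg]
  · rw [map_apply, genMat_of_lt h, piHom, aeval_X]
    rfl

lemma piHom_comp_piHom_inv (g : GL (Fin n) ℂ) :
    (piHom n g).comp (piHom n g⁻¹) = AlgHom.id ℂ (P n) := by
  have fixes_genMat : ((genMat n).map (piHom n g⁻¹)).map (piHom n g) = genMat n := by
    rw [map_piHom_genMat, ← AlgHom.coe_toLinearMap, map_congruence, AlgHom.coe_toLinearMap,
      map_piHom_genMat, congruence_congruence, inv_inv, Units.mul_inv, one_congruence]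
  refine MvPolynomial.algHom_ext fun ⟨(i, j), h⟩ ↦ ?_
  simpa [genMat_of_lt h] using congr_fun₂ fixes_genMat i j

/-- `π(g)` as an automorphism of `P n`, with inverse `π(g⁻¹)`. -/
def piEquiv (g : GL (Fin n) ℂ) : P n ≃ₐ[ℂ] P n :=
  AlgEquiv.ofAlgHom (piHom n g) (piHom n g⁻¹) (piHom_comp_piHom_inv g)
    (by simpa only [inv_inv] using piHom_comp_piHom_inv g⁻¹)

/-- Conjugation `T ↦ π(g) ∘ T ∘ π(g)⁻¹` as an automorphism of the algebra `End(P)`. -/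
def piConj (g : GL (Fin n) ℂ) : Module.End ℂ (P n) ≃ₐ[ℂ] Module.End ℂ (P n) :=
  (piEquiv g).toLinearEquiv.conjAlgEquiv ℂ

lemma piConj_apply (g : GL (Fin n) ℂ) (T : Module.End ℂ (P n)) :
    piConj g T = (piHom n g).toLinearMap ∘ₗ T ∘ₗ (piHom n g⁻¹).toLinearMap :=
  rfl

lemma piConj_eq_of_comp_piHom_eq {g : GL (Fin n) ℂ} {S T : Module.End ℂ (P n)}
    (h : ∀ p, S (piHom n g p) = piHom n g (T p)) : piConj g T = S := by
  refine LinearMap.ext fun p ↦ ?_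
  have piHom_piHom_inv : piHom n g (piHom n g⁻¹ p) = p := (piEquiv g).apply_symm_apply p
  calc piConj g T p = piHom n g (T (piHom n g⁻¹ p)) := rfl
    _ = S p := by rw [← h, piHom_piHom_inv]

end GenericMatrix

section Operators

variable {n : ℕ}

lemma of_Mop_eq_map_lmul : of (Mop n) = (genMat n).map (Algebra.lmul ℂ (P n)) := by
  ext1 i j
  simp only [of_apply, map_apply, Mop, genMat]
  split_ifs
  · rfl
  · exact (map_neg (Algebra.lmul ℂ (P n)) _).symm
  · exact (map_zero (Algebra.lmul ℂ (P n))).symm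

lemma piConj_lmul (g : GL (Fin n) ℂ) (f : P n) :
    piConj g (Algebra.lmul ℂ (P n) f) = Algebra.lmul ℂ (P n) (piHom n g f) :=
  piConj_eq_of_comp_piHom_eq fun p ↦ (map_mul (piHom n g) f p).symm

lemma map_piConj_Mop (g : GL (Fin n) ℂ) :
    (of (Mop n)).map (piConj g) =
      congruence (↑g⁻¹ : Matrix (Fin n) (Fin n) ℂ) (of (Mop n)) := by
  have lmul_congruence := map_congruence (Algebra.lmul ℂ (P n)).toLinearMap
    (↑g⁻¹ : Matrix (Fin n) (Fin n) ℂ) (genMat n)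
  rw [AlgHom.coe_toLinearMap] at lmul_congruence
  rw [of_Mop_eq_map_lmul, ← lmul_congruence, ← map_piHom_genMat]
  ext1 i j
  exact piConj_lmul g (genMat n i j)

/-- The derivative of polynomials on the space of alternating matrices in a constant direction `Δ`.
Only the entries of `Δ` above the diagonal matter. -/
def dirDeriv (n : ℕ) : Matrix (Fin n) (Fin n) ℂ →ₗ[ℂ] Derivation ℂ (P n) (P n) :=
  (mkDerivationEquiv ℂ).toLinearMap ∘ₗ
    LinearMap.pi fun v ↦ Algebra.linearMap ℂ (P n) ∘ₗ entryLinearMap ℂ ℂ v.1.1 v.1.2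

lemma dirDeriv_X (Δ : Matrix (Fin n) (Fin n) ℂ) (v : Idx n) :
    dirDeriv n Δ (X v) = C (Δ v.1.1 v.1.2) :=
  mkDerivation_X ..

lemma map_dirDeriv_genMat {Δ : Matrix (Fin n) (Fin n) ℂ} (hΔ : Δᵀ = -Δ) :
    (genMat n).map (dirDeriv n Δ) = Δ.map (Algebra.linearMap ℂ (P n)) := by
  refine ext_of_transpose_eq_neg (transpose_map_eq_neg _ transpose_genMat)
    (transpose_map_eq_neg _ hΔ) fun i j h ↦ ?_
  rw [map_apply, genMat_of_lt h, dirDeriv_X]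
  rfl

lemma derivation_algHom_eq_algHom_derivation {σ R A : Type*} [CommSemiring R] [CommSemiring A]
    [Algebra R A] (φ : MvPolynomial σ R →ₐ[R] A)
    (D : Derivation R (MvPolynomial σ R) (MvPolynomial σ R)) (E : Derivation R A A)
    (h : ∀ v, E (φ (X v)) = φ (D (X v))) (p : MvPolynomial σ R) : E (φ p) = φ (D p) := by
  induction p using MvPolynomial.induction_on with
  | C r => simp [← algebraMap_eq]
  | add p q hp hq => simp only [map_add, hp, hq]
  | mul_X p v hp => simp only [map_mul, Derivation.leibniz, map_add, smul_eq_mul, hp, h]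

lemma piConj_dirDeriv (g : GL (Fin n) ℂ) {Δ : Matrix (Fin n) (Fin n) ℂ} (hΔ : Δᵀ = -Δ) :
    piConj g (dirDeriv n Δ : P n →ₗ[ℂ] P n) =
      dirDeriv n (congruence (g : Matrix (Fin n) (Fin n) ℂ) Δ) := by
  have hgΔ : (congruence (g : Matrix (Fin n) (Fin n) ℂ) Δ)ᵀ = -congruence g.val Δ := by
    rw [transpose_congruence, hΔ, congruence_neg]
  have on_genMat : ((genMat n).map (piHom n g)).map (dirDeriv n (congruence g.val Δ)) =
      Δ.map (Algebra.linearMap ℂ (P n)) := by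
    rw [map_piHom_genMat, ← Derivation.coeFn_coe, map_congruence, Derivation.coeFn_coe,
      map_dirDeriv_genMat hgΔ, ← map_congruence, congruence_congruence, Units.inv_mul,
      one_congruence]
  refine piConj_eq_of_comp_piHom_eq
    (derivation_algHom_eq_algHom_derivation _ _ _ fun ⟨(i, j), h⟩ ↦ ?_)
  rw [dirDeriv_X, ← algebraMap_eq, AlgHom.commutes, ← genMat_of_lt h]
  exact congr_fun₂ on_genMat i j

/-- The elementary alternating matrix `E_{ij} - E_{ji}`. -/
def altSingle (i j : Fin n) : Matrix (Fin n) (Fin n) ℂ :=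
  single i j 1 - single j i 1

lemma transpose_altSingle (i j : Fin n) : (altSingle i j)ᵀ = -altSingle i j := by
  simp [altSingle]

lemma altSingle_self (i : Fin n) : altSingle i i = 0 :=
  sub_self _

lemma altSingle_swap (i j : Fin n) : altSingle i j = -altSingle j i :=
  (neg_sub _ _).symm

lemma dirDeriv_altSingle_of_lt {i j : Fin n} (h : i < j) :
    dirDeriv n (altSingle i j) = pderiv ⟨(i, j), h⟩ := by
  refine derivation_ext fun ⟨(k, l), hkl⟩ ↦ ?_
  have not_reversed : ¬ (j = k ∧ i = l) := fun ⟨hjk, hil⟩ ↦ h.asymm (hjk ▸ hil ▸ hkl)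
  simp [dirDeriv_X, altSingle, single_apply, not_reversed, pderiv_X, Pi.single_apply,
    apply_ite C, eq_comm]

lemma Dop_eq_dirDeriv (i j : Fin n) :
    Dop n i j = (dirDeriv n (altSingle i j) : P n →ₗ[ℂ] P n) := by
  unfold Dop
  split_ifs with hij hji
  · rw [dirDeriv_altSingle_of_lt hij]
  · rw [altSingle_swap, map_neg, dirDeriv_altSingle_of_lt hji, Derivation.coe_neg_linearMap]
  · obtain rfl : i = j := le_antisymm (not_lt.1 hji) (not_lt.1 hij)
    rw [altSingle_self, map_zero, Derivation.coe_zero_linearMap]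

lemma congruence_altSingle (a : Matrix (Fin n) (Fin n) ℂ) (i j : Fin n) :
    congruence a (altSingle i j) = ∑ k, ∑ l, (a k i * a l j) • altSingle k l := by
  ext p q
  simp [congruence_apply, altSingle, Matrix.sum_apply, single_apply, mul_sub,
    Finset.sum_sub_distrib, ite_and, mul_comm]

lemma map_piConj_Dop (g : GL (Fin n) ℂ) :
    (of (Dop n)).map (piConj g) = congruence (g : Matrix (Fin n) (Fin n) ℂ)ᵀ (of (Dop n)) := by
  ext1 i j
  simp only [map_apply, of_apply, congruence_apply, transpose_apply, Dop_eq_dirDeriv]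
  rw [piConj_dirDeriv g (transpose_altSingle i j), congruence_altSingle]
  refine LinearMap.ext fun p ↦ ?_
  have apply_sum (F : Fin n → Derivation ℂ (P n) (P n)) : (∑ k, F k) p = ∑ k, F k p :=
    (congr_fun (map_sum Derivation.coeFnAddMonoidHom F Finset.univ) p).trans
      (Finset.sum_apply _ _ _)
  simp [apply_sum]

end Operators

section AntiDiagonal

lemma Jmat_eq_permMatrix (A : Type*) [Zero A] [One A] (n : ℕ) :
    Jmat A n = Fin.revPerm.permMatrix A := by
  ext i j
  simp only [Jmat, of_apply, PEquiv.toMatrix_apply, Equiv.toPEquiv_apply, Option.mem_def,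
    Option.some_inj, Fin.revPerm_apply, Fin.ext_iff, Fin.val_rev]
  congr 1
  grind

lemma map_algebraMap_Jmat (R A : Type*) [CommSemiring R] [Semiring A] [Algebra R A] (n : ℕ) :
    (Jmat R n).map (algebraMap R A) = Jmat A n := by
  ext i j
  simp [Jmat, apply_ite (algebraMap R A)]

lemma map_algebraMap_smul_Jmat {R : Type*} (A : Type*) [CommSemiring R] [Semiring A]
    [Algebra R A] (c : R) (n : ℕ) :
    (c • Jmat R n).map (algebraMap R A) = c • Jmat A n := by
  rw [← map_algebraMap_Jmat R A]
  exact Matrix.map_smul _ c ((Algebra.linearMap R A).map_smul c) _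

lemma transpose_Jmat (A : Type*) [Zero A] [One A] (n : ℕ) : (Jmat A n)ᵀ = Jmat A n := by
  ext i j
  simp [Jmat, add_comm]

lemma Jmat_mul_Jmat (R : Type*) [NonAssocSemiring R] (n : ℕ) : Jmat R n * Jmat R n = 1 := by
  have revPerm_mul_self : (Fin.revPerm * Fin.revPerm : Equiv.Perm (Fin n)) = 1 := by ext; simp
  rw [Jmat_eq_permMatrix, ← permMatrix_mul, revPerm_mul_self, permMatrix_one]

end AntiDiagonal

section BlockAction

variable {n : ℕ}

/-- The matrix `diag(g⁻¹, J gᵀ J)`, by which `π(g)` acts on `Φ̃(u)` through congruence. -/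
def blockAction (g : GL (Fin n) ℂ) : Matrix (Fin n ⊕ Fin n) (Fin n ⊕ Fin n) ℂ :=
  fromBlocks ↑g⁻¹ 0 0 (Jmat ℂ n * (g : Matrix (Fin n) (Fin n) ℂ)ᵀ * Jmat ℂ n)

lemma det_blockAction (g : GL (Fin n) ℂ) : (blockAction g).det = 1 := by
  rw [blockAction, det_fromBlocks_zero₂₁, det_mul_right_comm, Jmat_mul_Jmat, one_mul,
    det_transpose, ← det_mul, Units.inv_mul, det_one]

lemma map_piConj_map_algebraMap (g : GL (Fin n) ℂ) (a : Matrix (Fin n) (Fin n) ℂ) :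
    (a.map (algebraMap ℂ (Module.End ℂ (P n)))).map (piConj g) = a.map (algebraMap ℂ _) := by
  ext1 i j
  exact (piConj g).commutes (a i j)

lemma inv_mul_smul_Jmat_mul (g : GL (Fin n) ℂ) (c : ℂ) :
    (↑g⁻¹ : Matrix (Fin n) (Fin n) ℂ) * (c • Jmat ℂ n) *
      (Jmat ℂ n * (g : Matrix (Fin n) (Fin n) ℂ)ᵀ * Jmat ℂ n)ᵀ = c • Jmat ℂ n := by
  simp only [transpose_mul, transpose_transpose, transpose_Jmat, Matrix.mul_smul, Matrix.smul_mul]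
  rw [Matrix.mul_assoc, ← Matrix.mul_assoc (Jmat ℂ n), Jmat_mul_Jmat, Matrix.one_mul,
    ← Matrix.mul_assoc, Units.inv_mul, Matrix.one_mul]

lemma mul_smul_Jmat_mul_inv (g : GL (Fin n) ℂ) (c : ℂ) :
    Jmat ℂ n * (g : Matrix (Fin n) (Fin n) ℂ)ᵀ * Jmat ℂ n * (c • Jmat ℂ n) *
      (↑g⁻¹ : Matrix (Fin n) (Fin n) ℂ)ᵀ = c • Jmat ℂ n := by
  simpa only [transpose_mul, transpose_smul, transpose_transpose, transpose_Jmat,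
    Matrix.mul_assoc] using congr_arg transpose (inv_mul_smul_Jmat_mul g c)

lemma PhiTilde_eq_reindex (u : ℂ) :
    PhiTilde n u = reindex (sumEquiv n) (sumEquiv n)
      (fromBlocks (of (Mop n)) ((u • Jmat ℂ n).map (algebraMap ℂ _))
        ((-u • Jmat ℂ n).map (algebraMap ℂ _)) (congruence (Jmat ℂ n) (-of (Dop n)))) := by
  rw [neg_smul, Matrix.map_neg _ (map_neg _), map_algebraMap_smul_Jmat, congruence_neg, congruence,
    transpose_Jmat, map_algebraMap_Jmat]
  rfl

lemma map_piConj_congruence_Jmat_neg_Dop (g : GL (Fin n) ℂ) :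
    (congruence (Jmat ℂ n) (-of (Dop n))).map (piConj g) =
      congruence (Jmat ℂ n * (g : Matrix (Fin n) (Fin n) ℂ)ᵀ * Jmat ℂ n)
        (congruence (Jmat ℂ n) (-of (Dop n))) := by
  have map_neg_Dop : (-of (Dop n)).map (piConj g) =
      congruence (g : Matrix (Fin n) (Fin n) ℂ)ᵀ (-of (Dop n)) := by
    rw [Matrix.map_neg _ (map_neg (piConj g)), map_piConj_Dop, congruence_neg]
  rw [congruence_congruence, Matrix.mul_assoc, Jmat_mul_Jmat, Matrix.mul_one,
    ← congruence_congruence, ← map_neg_Dop]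
  exact map_congruence (piConj g).toLinearMap (Jmat ℂ n) (-of (Dop n))

lemma map_piConj_PhiTilde (g : GL (Fin n) ℂ) (u : ℂ) :
    (PhiTilde n u).map (piConj g) =
      congruence (reindex (sumEquiv n) (sumEquiv n) (blockAction g)) (PhiTilde n u) := by
  rw [PhiTilde_eq_reindex, congruence_reindex, blockAction, congruence_fromBlocks]
  simp only [← Matrix.map_mul, inv_mul_smul_Jmat_mul, mul_smul_Jmat_mul_inv]
  rw [← map_piConj_Mop, ← map_piConj_congruence_Jmat_neg_Dop, reindex_apply, reindex_apply,
    ← submatrix_map, fromBlocks_map, map_piConj_map_algebraMap, map_piConj_map_algebraMap]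

end BlockAction

/-- `Pf(Φ̃(u))` is `GL_n`-invariant: `π(g) ∘ Pf(Φ̃(u)) ∘ π(g)⁻¹ = Pf(Φ̃(u))`. -/
theorem Pf_PhiTilde_invariant (n : ℕ) (hn : 1 ≤ n) (g : GL (Fin n) ℂ) (u : ℂ) :
    (piHom n g).toLinearMap ∘ₗ Pf (PhiTilde n u) ∘ₗ (piHom n g⁻¹).toLinearMap =
      Pf (PhiTilde n u) := by
  rw [← piConj_apply, map_Pf, map_piConj_PhiTilde, Pf_congruence, det_reindex_self,
    det_blockAction, one_smul]

end
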